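/- Let J : ℝ → [0,∞) be a convex function with J(0) = 0, and let g ∈ L¹(ℝⁿ) be nonnegative. Then for all pairs of nonnegative measurable functions u, v : ℝⁿ → [0,∞) such that |{u > τ}| < ∞ and |{v > τ}| < ∞ for all τ > 0 and such that ∫_{ℝⁿ}∫_{ℝⁿ} J(u(x) − v(y)) g(x−y) dx dy is finite, one has ∫_{ℝⁿ}∫_{ℝⁿ} J(u^{*n}(x) − v^{*n}(y)) g^{*n}(x−y) dx dy ≤ ∫_{ℝⁿ}∫_{ℝⁿ} J(u(x) − v(y)) g(x−y) dx dy. -/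

import Mathlib

open MeasureTheory Real

/-- For a measurable set `A ⊂ ℝⁿ` of finite Lebesgue measure, the radius of the open ball
centered at the origin with the same measure as `A`. -/
noncomputable def schwarzRadius (n : ℕ) (A : Set (EuclideanSpace ℝ (Fin n))) : ℝ :=
  ((volume A).toReal / (volume (Metric.ball (0 : EuclideanSpace ℝ (Fin n)) 1)).toReal) ^
    ((n : ℝ)⁻¹)

/-- `A^{*n}`: the open ball in `ℝⁿ` centered at the origin with the same measure as `A`. -/
noncomputable def schwarzSet (n : ℕ) (A : Set (EuclideanSpace ℝ (Fin n))) :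
    Set (EuclideanSpace ℝ (Fin n)) :=
  Metric.ball 0 (schwarzRadius n A)

/-- The Schwarz rearrangement `u^{*n}(x) := ∫₀^∞ χ_{{|u|>t}^{*n}}(x) dt`. -/
noncomputable def schwarzRearr (n : ℕ) (u : EuclideanSpace ℝ (Fin n) → ℝ) :
    EuclideanSpace ℝ (Fin n) → ℝ := fun x =>
  ∫ t in Set.Ioi (0 : ℝ), (schwarzSet n {y | t < |u y|}).indicator (fun _ => (1 : ℝ)) x

/-!
Everything rests on Riesz's inequality for sets: `∬ 𝟙_A(x) 𝟙_B(y) 𝟙_C(x - y)` does not decrease when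
`A`, `B`, `C` are replaced by centred balls of the same measure. On the line, cutting a piece of
measure `t` off the left of both `A` and `B` bounds the form by `t |C| + (|A| - t) (|B| - t)`, a
bound which centred intervals attain for a suitable `t`. By Fubini the form does not decrease under
Steiner symmetrization along a direction either. No limit of symmetrizations is taken: among the
triples with a form at least as large, consider the total measure lying outside the target balls.
Averaging over translations yields a direction whose symmetrization lowers this excess by a fixed
multiple of its square, so its infimum is zero, and the form is continuous in measure.

Since `∬ 𝟙_A(x) 𝟙_C(x - y)` is just `|A| |C|`, the inequality reverses when `B` is replaced by its
complement. The layer-cake identity `(u - v - σ)₊ = ∫ 𝟙{t + σ < u} 𝟙{v ≤ t} dt` then gives the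
result for hinges `J`, and a nonnegative convex `J` with `J 0 = 0` is, on each half-line, a mixture
of hinges with weights given by the Stieltjes measure of its right derivative.
-/

open Set Filter Topology Metric
open scoped ENNReal NNReal

namespace RieszRearrangement

/-! ### The Riesz form on sets -/

section RieszForm

variable {G H : Type*} [AddCommGroup G] [MeasurableSpace G] [AddCommGroup H] [MeasurableSpace H]

/-- The trilinear form `∬ 𝟙_A(x) 𝟙_B(y) 𝟙_C(x - y) dμ dμ` of the Riesz rearrangement inequality,
written as the measure of a set of pairs. -/
noncomputable def rieszForm (μ : Measure G) (A B C : Set G) : ℝ≥0∞ :=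
  (μ.prod μ) {p | p.1 ∈ A ∧ p.2 ∈ B ∧ p.1 - p.2 ∈ C}

/-- The part of `B` that the translation by `z` carries into `A`. -/
def overlap (A B : Set G) (z : G) : Set G := {y | z + y ∈ A ∧ y ∈ B}

lemma rieszForm_mono {μ : Measure G} {A A' B B' C C' : Set G} (hA : A ⊆ A') (hB : B ⊆ B')
    (hC : C ⊆ C') : rieszForm μ A B C ≤ rieszForm μ A' B' C' :=
  measure_mono fun _ hp => ⟨hA hp.1, hB hp.2.1, hC hp.2.2⟩

lemma rieszForm_iUnion {μ : Measure G} {A B C : ℕ → Set G} (hA : Monotone A) (hB : Monotone B)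
    (hC : Monotone C) :
    rieszForm μ (⋃ k, A k) (⋃ k, B k) (⋃ k, C k) = ⨆ k, rieszForm μ (A k) (B k) (C k) := by
  have hmono : Monotone fun k => {p : G × G | p.1 ∈ A k ∧ p.2 ∈ B k ∧ p.1 - p.2 ∈ C k} :=
    fun i j hij p hp => ⟨hA hij hp.1, hB hij hp.2.1, hC hij hp.2.2⟩
  unfold rieszForm
  rw [← hmono.measure_iUnion]
  congr 1
  ext p
  simp only [mem_ofPred_eq, mem_iUnion]
  refine ⟨?_, fun ⟨k, hAk, hBk, hCk⟩ => ⟨⟨k, hAk⟩, ⟨k, hBk⟩, ⟨k, hCk⟩⟩⟩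
  rintro ⟨⟨i, hi⟩, ⟨j, hj⟩, ⟨k, hk⟩⟩
  exact ⟨max i (max j k), hA (le_max_left _ _) hi,
    hB ((le_max_left _ _).trans (le_max_right _ _)) hj,
    hC ((le_max_right _ _).trans (le_max_right _ _)) hk⟩

lemma rieszForm_univ {μ : Measure G} [SFinite μ] (A B : Set G) :
    rieszForm μ A B univ = μ A * μ B := by
  rw [← Measure.prod_prod, rieszForm]
  congr 1 with p
  simp

lemma rieszForm_preimage [MeasurableSub₂ H] {μ : Measure G} {ν : Measure H} [SFinite μ]
    {e : G →+ H} (he : MeasurePreserving e μ ν) {A B C : Set H}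
    (hA : MeasurableSet A) (hB : MeasurableSet B) (hC : MeasurableSet C) :
    rieszForm μ (e ⁻¹' A) (e ⁻¹' B) (e ⁻¹' C) = rieszForm ν A B C := by
  have hmeas : MeasurableSet {p : H × H | p.1 ∈ A ∧ p.2 ∈ B ∧ p.1 - p.2 ∈ C} := by measurability
  have h := (he.prod he).measure_preimage hmeas.nullMeasurableSet
  simpa only [rieszForm, preimage_ofPred_eq, Prod.map, ← map_sub, mem_preimage] using h

variable [MeasurableAdd₂ G]

lemma measurableSet_overlap {A B : Set G} (hA : MeasurableSet A) (hB : MeasurableSet B) (z : G) :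
    MeasurableSet (overlap A B z) :=
  (measurable_const_add z hA).inter hB

lemma measure_overlap_le_left {μ : Measure G} [μ.IsAddLeftInvariant] (A B : Set G) (z : G) :
    μ (overlap A B z) ≤ μ A := by
  rw [← measure_preimage_add μ z A]
  exact measure_mono fun _ hy => hy.1

variable {μ : Measure G} [SFinite μ]

lemma measurable_measure_overlap {A B : Set G} (hA : MeasurableSet A) (hB : MeasurableSet B) :
    Measurable fun z => μ (overlap A B z) := by
  have h : MeasurableSet {p : G × G | p.1 + p.2 ∈ A ∧ p.2 ∈ B} := by measurability
  exact measurable_measure_prodMk_left h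

variable [MeasurableNeg G] [μ.IsAddLeftInvariant]

lemma rieszForm_eq_setLIntegral_overlap {A B C : Set G} (hA : MeasurableSet A)
    (hB : MeasurableSet B) (hC : MeasurableSet C) :
    rieszForm μ A B C = ∫⁻ z in C, μ (overlap A B z) ∂μ := by
  set T : Set (G × G) := {p | p.1 ∈ C ∧ p.1 + p.2 ∈ A ∧ p.2 ∈ B}
  have hT : MeasurableSet T := by measurability
  have hpre : (fun p : G × G => (p.1 - p.2, p.2)) ⁻¹' T =
      {p | p.1 ∈ A ∧ p.2 ∈ B ∧ p.1 - p.2 ∈ C} := by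
    ext p
    simp [T]
    tauto
  rw [rieszForm, ← hpre,
    (measurePreserving_sub_prod μ μ).measure_preimage hT.nullMeasurableSet, Measure.prod_apply hT,
    ← lintegral_indicator hC]
  refine lintegral_congr fun z => ?_
  by_cases hz : z ∈ C <;> simp [T, overlap, hz]

lemma rieszForm_congr_ae {A A' B B' C C' : Set G} (hA : A =ᵐ[μ] A') (hB : B =ᵐ[μ] B')
    (hC : C =ᵐ[μ] C') : rieszForm μ A B C = rieszForm μ A' B' C' := by
  have hsub : Measure.QuasiMeasurePreserving (fun p : G × G => p.1 - p.2) (μ.prod μ) μ :=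
    Measure.quasiMeasurePreserving_fst.comp
      (measurePreserving_sub_prod μ μ).quasiMeasurePreserving
  exact measure_congr <| (Measure.quasiMeasurePreserving_fst.preimage_ae_eq hA).inter <|
    (Measure.quasiMeasurePreserving_snd.preimage_ae_eq hB).inter (hsub.preimage_ae_eq hC)

lemma lintegral_measure_overlap {A B : Set G} (hA : MeasurableSet A) (hB : MeasurableSet B) :
    ∫⁻ z, μ (overlap A B z) ∂μ = μ A * μ B := by
  rw [← rieszForm_univ, rieszForm_eq_setLIntegral_overlap hA hB .univ, setLIntegral_univ]

lemma rieszForm_univ_middle {A C : Set G} (hA : MeasurableSet A) (hC : MeasurableSet C) :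
    rieszForm μ A univ C = μ A * μ C := by
  have hov : ∀ z, μ (overlap A univ z) = μ A := fun z => by
    rw [← measure_preimage_add μ z A]
    congr 1 with y
    simp [overlap]
  simp [rieszForm_eq_setLIntegral_overlap hA .univ hC, hov]

lemma rieszForm_add_rieszForm_compl {A B C : Set G} (hA : MeasurableSet A) (hB : MeasurableSet B)
    (hC : MeasurableSet C) : rieszForm μ A B C + rieszForm μ A Bᶜ C = μ A * μ C := by
  have hmeas : MeasurableSet {p : G × G | p.2 ∈ B} := measurable_snd hB
  rw [← rieszForm_univ_middle hA hC, rieszForm, rieszForm, rieszForm,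
    ← measure_inter_add_sdiff {p : G × G | p.1 ∈ A ∧ p.2 ∈ univ ∧ p.1 - p.2 ∈ C} hmeas]
  congr 2 <;> ext p <;> simp <;> tauto

lemma rieszForm_le_add_diff {A A₀ B B₀ C C₀ : Set G} (hA : MeasurableSet A)
    (hC : MeasurableSet C) (hC₀ : MeasurableSet C₀) :
    rieszForm μ A B C ≤ rieszForm μ A₀ B₀ C₀ +
      (μ (A \ A₀) * μ B + μ A * μ (B \ B₀) + μ A * μ (C \ C₀)) := by
  rw [← rieszForm_univ, ← rieszForm_univ, ← rieszForm_univ_middle hA (hC.diff hC₀)]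
  unfold rieszForm
  grw [← measure_union_le, ← measure_union_le, ← measure_union_le]
  refine measure_mono fun p => ?_
  simp only [mem_ofPred_eq, mem_union, Set.mem_sdiff, mem_univ, and_true, true_and]
  tauto

end RieszForm

/-! ### Riesz's inequality on the line -/

section Line

lemma exists_isLowerSet_measure_eq {μ : Measure ℝ} [IsFiniteMeasure μ] [NullSingletonClass μ]
    {t : ℝ≥0∞} (ht : t ≤ μ univ) : ∃ L, IsLowerSet L ∧ MeasurableSet L ∧ μ L = t := by
  rcases eq_zero_or_pos t with rfl | ht₀
  · exact ⟨∅, isLowerSet_empty, .empty, measure_empty⟩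
  rcases ht.eq_or_lt with rfl | ht₁
  · exact ⟨univ, isLowerSet_univ, .univ, rfl⟩
  have hcont : Continuous fun b => μ.real (Iic b) := by
    have hcdf (b : ℝ) :
        μ.real (Iic b) = (∫ _ in (0 : ℝ)..b, (1 : ℝ) ∂μ) + μ.real (Iic 0) := by
      rw [← intervalIntegral.integral_Iic_sub_Iic (integrable_const _).integrableOn
        (integrable_const _).integrableOn, setIntegral_const, setIntegral_const]
      simp only [smul_eq_mul, mul_one, sub_add_cancel]
    rw [funext hcdf]
    exact ((integrable_const 1).continuous_primitive 0).add_const _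
  have hle : ∃ b, μ.real (Iic b) ≤ t.toReal := by
    have hlim := tendsto_measure_Ici_atBot μ
    obtain ⟨b, hb⟩ := (hlim.eventually_const_lt
      (ENNReal.sub_lt_self (measure_ne_top μ univ) (ht₀.trans ht₁).ne' ht₀.ne')).exists
    refine ⟨b, ENNReal.toReal_mono ht₁.ne_top ?_⟩
    rw [← measure_congr Iio_ae_eq_Iic, ← compl_Ici, measure_compl measurableSet_Ici (by finiteness)]
    exact tsub_le_iff_tsub_le.1 hb.le
  have hge : ∃ b, t.toReal ≤ μ.real (Iic b) := by
    obtain ⟨b, hb⟩ := ((tendsto_measure_Iic_atTop μ).eventually_const_lt ht₁).exists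
    exact ⟨b, ENNReal.toReal_mono (by finiteness) hb.le⟩
  obtain ⟨b, hb⟩ := mem_range_of_exists_le_of_exists_ge hcont hle hge
  exact ⟨Iic b, isLowerSet_Iic b, measurableSet_Iic,
    (ENNReal.toReal_eq_toReal_iff' (by finiteness) ht₁.ne_top).1 hb⟩

lemma volume_overlap_le_add {A B L M : Set ℝ} (hL : IsLowerSet L) (hM : IsLowerSet M) {t : ℝ≥0∞}
    (hLt : volume (A ∩ L) = t) (hMt : volume (B ∩ M) = t) (z : ℝ) :
    volume (overlap A B z) ≤ t + volume (overlap (A \ L) (B \ M) z) := by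
  have hLz : IsLowerSet ((z + ·) ⁻¹' L) := hL.preimage (monotone_id.const_add z)
  suffices h : ∃ T, volume T ≤ t ∧ overlap A B z ⊆ T ∪ overlap (A \ L) (B \ M) z by
    obtain ⟨T, hT, hsub⟩ := h
    grw [hsub, measure_union_le, hT]
  rcases hLz.total hM with hLM | hML
  · refine ⟨B ∩ M, hMt.le, fun y hy => ?_⟩
    by_cases hyM : y ∈ M
    · exact Or.inl ⟨hy.2, hyM⟩
    · exact Or.inr ⟨⟨hy.1, fun hyL => hyM (hLM hyL)⟩, hy.2, hyM⟩
  · refine ⟨(z + ·) ⁻¹' (A ∩ L), by rw [measure_preimage_add, hLt], fun y hy => ?_⟩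
    by_cases hyL : z + y ∈ L
    · exact Or.inl ⟨hy.1, hyL⟩
    · exact Or.inr ⟨⟨hy.1, hyL⟩, hy.2, fun hyM => hyL (hML hyM)⟩

-- Both sets are cut at a point which leaves mass `t` on its left.
lemma rieszForm_le_mul_add_sub_mul_sub {A B C : Set ℝ} (hA : MeasurableSet A)
    (hB : MeasurableSet B) (hC : MeasurableSet C) (hA_fin : volume A ≠ ∞) (hB_fin : volume B ≠ ∞)
    {t : ℝ≥0∞} (htA : t ≤ volume A) (htB : t ≤ volume B) :
    rieszForm volume A B C ≤ t * volume C + (volume A - t) * (volume B - t) := by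
  have : IsFiniteMeasure (volume.restrict A) := isFiniteMeasure_restrict.2 hA_fin
  have : IsFiniteMeasure (volume.restrict B) := isFiniteMeasure_restrict.2 hB_fin
  obtain ⟨L, hL, hLm, hLt⟩ := exists_isLowerSet_measure_eq (μ := volume.restrict A) (by simpa)
  obtain ⟨M, hM, hMm, hMt⟩ := exists_isLowerSet_measure_eq (μ := volume.restrict B) (by simpa)
  rw [Measure.restrict_apply hLm, inter_comm] at hLt
  rw [Measure.restrict_apply hMm, inter_comm] at hMt
  have ht : t ≠ ∞ := ne_top_of_le_ne_top hA_fin htA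
  have hAL : volume (A \ L) = volume A - t := by
    rw [← measure_inter_add_sdiff A hLm, hLt, ENNReal.add_sub_cancel_left ht]
  have hBM : volume (B \ M) = volume B - t := by
    rw [← measure_inter_add_sdiff B hMm, hMt, ENNReal.add_sub_cancel_left ht]
  calc rieszForm volume A B C = ∫⁻ z in C, volume (overlap A B z) :=
        rieszForm_eq_setLIntegral_overlap hA hB hC
    _ ≤ ∫⁻ z in C, (t + volume (overlap (A \ L) (B \ M) z)) :=
        lintegral_mono fun z => volume_overlap_le_add hL hM hLt hMt z
    _ = t * volume C + ∫⁻ z in C, volume (overlap (A \ L) (B \ M) z) := by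
        rw [lintegral_add_left measurable_const, setLIntegral_const]
    _ ≤ t * volume C + ∫⁻ z, volume (overlap (A \ L) (B \ M) z) := by
        gcongr
        exact Measure.restrict_le_self
    _ = t * volume C + (volume A - t) * (volume B - t) := by
        rw [lintegral_measure_overlap (hA.diff hLm) (hB.diff hMm), hAL, hBM]

/-- The open interval of length `a` centred at the origin. -/
def centeredIoo (a : ℝ) : Set ℝ := Ioo (-(a / 2)) (a / 2)

lemma mem_centeredIoo {a x : ℝ} : x ∈ centeredIoo a ↔ |x| < a / 2 := abs_lt.symm

lemma measurableSet_centeredIoo {a : ℝ} : MeasurableSet (centeredIoo a) := measurableSet_Ioo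

lemma volume_centeredIoo (a : ℝ) : volume (centeredIoo a) = ENNReal.ofReal a := by
  simp [centeredIoo]

lemma centeredIoo_mono : Monotone centeredIoo := fun _ _ h =>
  Ioo_subset_Ioo (by linarith) (by linarith)

lemma volume_overlap_centeredIoo (a b z : ℝ) :
    volume (overlap (centeredIoo a) (centeredIoo b) z) =
      ENNReal.ofReal (min (min a b) ((a + b) / 2 - |z|)) := by
  have h : overlap (centeredIoo a) (centeredIoo b) z =
      Ioo (max (-(a / 2) - z) (-(b / 2))) (min (a / 2 - z) (b / 2)) := by
    ext x
    simp only [overlap, centeredIoo, mem_ofPred_eq, mem_Ioo, max_lt_iff, lt_min_iff,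
      sub_lt_iff_lt_add', lt_sub_iff_add_lt']
    tauto
  rw [h, Real.volume_Ioo]
  congr 1
  grind

-- The extremal `t` is the length of the overlap of the two intervals at a shift by `c / 2`.
lemma exists_mul_add_mul_le_rieszForm_centeredIoo {a b c : ℝ} (ha : 0 ≤ a) (hb : 0 ≤ b) :
    ∃ t, 0 ≤ t ∧ t ≤ a ∧ t ≤ b ∧
      ENNReal.ofReal t * ENNReal.ofReal c + ENNReal.ofReal (a - t) * ENNReal.ofReal (b - t) ≤
        rieszForm volume (centeredIoo a) (centeredIoo b) (centeredIoo c) := by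
  set t := max 0 (min (min a b) ((a + b - c) / 2))
  have ht₀ : 0 ≤ t := le_max_left _ _
  refine ⟨t, ht₀, by grind, by grind, ?_⟩
  set ov := fun z => min (min a b) ((a + b) / 2 - |z|)
  have hshrink : ∀ z, volume (overlap (centeredIoo (a - t)) (centeredIoo (b - t)) z) =
      ENNReal.ofReal (ov z - t) := fun z => by
    rw [volume_overlap_centeredIoo]
    congr 1
    grind
  rw [← volume_centeredIoo c, ← volume_centeredIoo (a - t), ← volume_centeredIoo (b - t),
    ← lintegral_measure_overlap measurableSet_centeredIoo measurableSet_centeredIoo,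
    rieszForm_eq_setLIntegral_overlap measurableSet_centeredIoo measurableSet_centeredIoo
      measurableSet_centeredIoo, ← setLIntegral_const,
    ← lintegral_indicator measurableSet_centeredIoo,
    ← lintegral_indicator measurableSet_centeredIoo,
    ← lintegral_add_left (measurable_const.indicator measurableSet_centeredIoo)]
  refine lintegral_mono fun z => ?_
  simp only [hshrink, volume_overlap_centeredIoo]
  by_cases hz : z ∈ centeredIoo c
  · rw [indicator_of_mem hz, indicator_of_mem hz]
    rw [mem_centeredIoo] at hz
    have hov : t = 0 ∨ t ≤ ov z := by grind
    rcases hov with h₀ | hov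
    · simp [h₀, ov]
    · rw [← ENNReal.ofReal_add ht₀ (by linarith), add_sub_cancel]
  · rw [indicator_of_notMem hz, indicator_of_notMem hz]
    rw [mem_centeredIoo] at hz
    have hov : ov z - t ≤ 0 := by grind
    simp [ENNReal.ofReal_of_nonpos hov]

/-- The symmetric rearrangement of a subset of the line. -/
noncomputable def symmInterval (A : Set ℝ) : Set ℝ := centeredIoo (volume A).toReal

lemma rieszForm_le_rieszForm_symmInterval {A B C : Set ℝ} (hA : MeasurableSet A)
    (hB : MeasurableSet B) (hC : MeasurableSet C) (hA_fin : volume A ≠ ∞) (hB_fin : volume B ≠ ∞)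
    (hC_fin : volume C ≠ ∞) :
    rieszForm volume A B C ≤
      rieszForm volume (symmInterval A) (symmInterval B) (symmInterval C) := by
  obtain ⟨t, ht₀, htA, htB, hle⟩ := exists_mul_add_mul_le_rieszForm_centeredIoo
    (c := (volume C).toReal) (volume A).toReal_nonneg (volume B).toReal_nonneg
  refine le_trans ?_ hle
  rw [ENNReal.ofReal_sub _ ht₀, ENNReal.ofReal_sub _ ht₀, ENNReal.ofReal_toReal hA_fin,
    ENNReal.ofReal_toReal hB_fin, ENNReal.ofReal_toReal hC_fin]
  exact rieszForm_le_mul_add_sub_mul_sub hA hB hC hA_fin hB_fin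
    ((ENNReal.ofReal_le_iff_le_toReal hA_fin).2 htA)
    ((ENNReal.ofReal_le_iff_le_toReal hB_fin).2 htB)

end Line

/-! ### Steiner symmetrization in a product `ℝ × F` -/

section Steiner

instance prodMeasurableAdd₂ {G H : Type*} [Add G] [Add H] [MeasurableSpace G] [MeasurableSpace H]
    [MeasurableAdd₂ G] [MeasurableAdd₂ H] : MeasurableAdd₂ (G × H) :=
  ⟨(measurable_fst.fst.add measurable_snd.fst).prodMk (measurable_fst.snd.add measurable_snd.snd)⟩

instance prodMeasurableNeg {G H : Type*} [Neg G] [Neg H] [MeasurableSpace G] [MeasurableSpace H]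
    [MeasurableNeg G] [MeasurableNeg H] : MeasurableNeg (G × H) :=
  ⟨measurable_fst.neg.prodMk measurable_snd.neg⟩

variable {F : Type*}

/-- The section of `A` at height `y`, a subset of the line. -/
def slice (A : Set (ℝ × F)) (y : F) : Set ℝ := {t | (t, y) ∈ A}

/-- Steiner symmetrization along the first factor: every section is replaced by the centred
interval of the same length. -/
def steinerSymm (A : Set (ℝ × F)) : Set (ℝ × F) := {p | p.1 ∈ symmInterval (slice A p.2)}

lemma slice_steinerSymm (A : Set (ℝ × F)) (y : F) :
    slice (steinerSymm A) y = symmInterval (slice A y) := rfl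

lemma volume_symmInterval {X : Set ℝ} (hX : volume X ≠ ∞) : volume (symmInterval X) = volume X := by
  rw [symmInterval, volume_centeredIoo, ENNReal.ofReal_toReal hX]

lemma symmInterval_subset_centeredIoo {X : Set ℝ} {a : ℝ} (ha : 0 ≤ a)
    (hX : X ⊆ centeredIoo a) : symmInterval X ⊆ centeredIoo a := by
  refine centeredIoo_mono (ENNReal.toReal_le_of_le_ofReal ha ?_)
  rw [← volume_centeredIoo]
  exact measure_mono hX

lemma steinerSymm_subset {A D : Set (ℝ × F)} (hAD : A ⊆ D)
    (hD : ∀ y, ∃ a, 0 ≤ a ∧ slice D y = centeredIoo a) : steinerSymm A ⊆ D := by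
  rintro ⟨t, y⟩ ht
  obtain ⟨a, ha, hDy⟩ := hD y
  have hAy : slice A y ⊆ centeredIoo a := hDy ▸ fun s hs => hAD hs
  exact hDy.superset (symmInterval_subset_centeredIoo ha hAy ht)

lemma volume_symmInterval_diff_add_min_le {X : Set ℝ} {a : ℝ} (hX : MeasurableSet X)
    (hX_fin : volume X ≠ ∞) :
    volume (symmInterval X \ centeredIoo a) +
        min (volume (X \ centeredIoo a)) (volume (centeredIoo a \ X)) ≤
      volume (X \ centeredIoo a) := by
  rcases le_total (volume X).toReal a with h | h
  · simp [symmInterval, sdiff_eq_empty.2 (centeredIoo_mono h)]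
  · have hsub : centeredIoo a ⊆ symmInterval X := centeredIoo_mono h
    have hinter : volume (X ∩ centeredIoo a) ≠ ∞ := by finiteness
    rw [measure_sdiff hsub measurableSet_centeredIoo.nullMeasurableSet
        (by simp [volume_centeredIoo]), volume_symmInterval hX_fin,
      ← measure_inter_add_sdiff X (measurableSet_centeredIoo (a := a)),
      ← measure_inter_add_sdiff (centeredIoo a) hX, inter_comm (centeredIoo a) X,
      ENNReal.add_sub_add_eq_sub_left hinter]
    set p := volume (X \ centeredIoo a)
    set q := volume (centeredIoo a \ X)
    rcases le_total p q with hpq | hqp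
    · simp [tsub_eq_zero_of_le hpq]
    · rw [min_eq_right hqp, tsub_add_cancel_of_le hqp]

variable [MeasureSpace F]

lemma measurableSet_slice {A : Set (ℝ × F)} (hA : MeasurableSet A) (y : F) :
    MeasurableSet (slice A y) :=
  measurable_prodMk_right hA

lemma measurableSet_steinerSymm {A : Set (ℝ × F)} (hA : MeasurableSet A) :
    MeasurableSet (steinerSymm A) := by
  have hlen : Measurable fun p : ℝ × F => (volume (slice A p.2)).toReal / 2 :=
    ((measurable_measure_prodMk_right hA).ennreal_toReal.comp measurable_snd).div_const 2
  exact (measurableSet_lt hlen.neg measurable_fst).inter (measurableSet_lt measurable_fst hlen)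

variable [SFinite (volume : Measure F)]

lemma lintegral_volume_slice {A : Set (ℝ × F)} (hA : MeasurableSet A) :
    ∫⁻ y, volume (slice A y) = volume A :=
  (Measure.prod_apply_symm hA).symm

lemma volume_steinerSymm {A : Set (ℝ × F)} (hA : MeasurableSet A)
    (hA_fin : ∀ y, volume (slice A y) ≠ ∞) : volume (steinerSymm A) = volume A := by
  rw [← lintegral_volume_slice hA, ← lintegral_volume_slice (measurableSet_steinerSymm hA)]
  simp_rw [slice_steinerSymm, volume_symmInterval (hA_fin _)]

lemma volume_steinerSymm_diff_add_lintegral_min_le {A D : Set (ℝ × F)} (hA : MeasurableSet A)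
    (hD : MeasurableSet D) (hA_fin : ∀ y, volume (slice A y) ≠ ∞)
    (hD_slice : ∀ y, ∃ a, slice D y = centeredIoo a) :
    volume (steinerSymm A \ D) +
        ∫⁻ y, min (volume (slice (A \ D) y)) (volume (slice (D \ A) y)) ≤
      volume (A \ D) := by
  have hm := (measurableSet_steinerSymm hA).diff hD
  rw [← lintegral_volume_slice hm, ← lintegral_volume_slice (hA.diff hD),
    ← lintegral_add_left (f := fun y => volume (slice (steinerSymm A \ D) y))
      (measurable_measure_prodMk_right hm)]
  refine lintegral_mono fun y => ?_
  obtain ⟨a, hDy⟩ := hD_slice y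
  have h := volume_symmInterval_diff_add_min_le (a := a) (measurableSet_slice hA y) (hA_fin y)
  rw [← hDy] at h
  exact h

variable [AddCommGroup F] [MeasurableAdd₂ F]

lemma volume_overlap_le_lintegral_min_slice {X Y : Set (ℝ × F)} (hX : MeasurableSet X)
    (hY : MeasurableSet Y) (c : ℝ) :
    volume (overlap X Y (c, 0)) ≤ ∫⁻ y, min (volume (slice X y)) (volume (slice Y y)) := by
  rw [← lintegral_volume_slice (measurableSet_overlap hX hY _)]
  have hslice : ∀ y, slice (overlap X Y (c, 0)) y = overlap (slice X y) (slice Y y) c := fun y => by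
    ext t
    simp [slice, overlap]
  simp_rw [hslice]
  exact lintegral_mono fun y =>
    le_min (measure_overlap_le_left _ _ _) (measure_mono fun _ ht => ht.2)

variable [MeasurableNeg F] [(volume : Measure F).IsAddLeftInvariant]

lemma rieszForm_eq_lintegral_slice {A B C : Set (ℝ × F)} (hA : MeasurableSet A)
    (hB : MeasurableSet B) (hC : MeasurableSet C) :
    rieszForm volume A B C =
      ∫⁻ w, ∫⁻ y, rieszForm volume (slice A (w + y)) (slice B y) (slice C w) := by
  have : (volume : Measure (ℝ × F)).IsAddLeftInvariant := Measure.prod.instIsAddLeftInvariant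
  have hslice : ∀ s w y,
      slice (overlap A B (s, w)) y = overlap (slice A (w + y)) (slice B y) s := fun s w y => by
    ext t
    simp [slice, overlap]
  have hmeas (w : F) : Measurable fun q : ℝ × F =>
      volume (overlap (slice A (w + q.2)) (slice B q.2) q.1) := by
    have : MeasurableSet {q : (ℝ × F) × ℝ | (q.1.1 + q.2, w + q.1.2) ∈ A ∧ (q.2, q.1.2) ∈ B} := by
      measurability
    exact measurable_measure_prodMk_left this
  rw [rieszForm_eq_setLIntegral_overlap hA hB hC, ← lintegral_indicator hC, Measure.volume_eq_prod,
    lintegral_prod_symm' _ ((measurable_measure_overlap hA hB).indicator hC)]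
  refine lintegral_congr fun w => ?_
  calc ∫⁻ s, C.indicator (fun z => volume (overlap A B z)) (s, w)
      = ∫⁻ s in slice C w, ∫⁻ y, volume (overlap (slice A (w + y)) (slice B y) s) := by
        rw [← lintegral_indicator (measurableSet_slice hC w)]
        refine lintegral_congr fun s => ?_
        simp only [← hslice, lintegral_volume_slice (measurableSet_overlap hA hB _)]
        rfl
    _ = ∫⁻ y, ∫⁻ s in slice C w, volume (overlap (slice A (w + y)) (slice B y) s) :=
        lintegral_lintegral_swap (hmeas w).aemeasurable
    _ = ∫⁻ y, rieszForm volume (slice A (w + y)) (slice B y) (slice C w) := by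
        refine lintegral_congr fun y => ?_
        rw [rieszForm_eq_setLIntegral_overlap (measurableSet_slice hA _) (measurableSet_slice hB _)
          (measurableSet_slice hC _)]

lemma rieszForm_le_rieszForm_steinerSymm {A B C : Set (ℝ × F)} (hA : MeasurableSet A)
    (hB : MeasurableSet B) (hC : MeasurableSet C) (hA_fin : ∀ y, volume (slice A y) ≠ ∞)
    (hB_fin : ∀ y, volume (slice B y) ≠ ∞) (hC_fin : ∀ y, volume (slice C y) ≠ ∞) :
    rieszForm volume A B C ≤
      rieszForm volume (steinerSymm A) (steinerSymm B) (steinerSymm C) := by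
  rw [rieszForm_eq_lintegral_slice hA hB hC,
    rieszForm_eq_lintegral_slice (measurableSet_steinerSymm hA) (measurableSet_steinerSymm hB)
      (measurableSet_steinerSymm hC)]
  exact lintegral_mono fun w => lintegral_mono fun y =>
    rieszForm_le_rieszForm_symmInterval (measurableSet_slice hA _) (measurableSet_slice hB _)
      (measurableSet_slice hC _) (hA_fin _) (hB_fin _) (hC_fin _)

end Steiner

/-! ### Steiner symmetrization along a direction -/

section Direction

variable {E F : Type*} [NormedAddCommGroup E] [InnerProductSpace ℝ E] [NormedAddCommGroup F]
  [InnerProductSpace ℝ F]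

/-- The coordinates `ℝ × F` of `E` given by an isometry with the Hilbert sum of `ℝ` and `F`. -/
noncomputable def coord (φ : E ≃ₗᵢ[ℝ] WithLp 2 (ℝ × F)) : E ≃+ ℝ × F :=
  φ.toLinearEquiv.toAddEquiv.trans (WithLp.addEquiv 2 (ℝ × F))

/-- Steiner symmetrization in the direction of the factor `ℝ` of the coordinates `coord φ`. -/
noncomputable def steinerAlong (φ : E ≃ₗᵢ[ℝ] WithLp 2 (ℝ × F)) (A : Set E) : Set E :=
  coord φ ⁻¹' steinerSymm ((coord φ).symm ⁻¹' A)

lemma exists_coord_eq_norm {z : E} (hz : z ≠ 0) :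
    ∃ φ : E ≃ₗᵢ[ℝ] WithLp 2 (ℝ × (ℝ ∙ ‖z‖⁻¹ • z)ᗮ), coord φ z = (‖z‖, 0) := by
  have he : ‖‖z‖⁻¹ • z‖ = 1 := norm_smul_inv_norm hz
  refine ⟨(ℝ ∙ ‖z‖⁻¹ • z).orthogonalDecomposition.trans (LinearIsometryEquiv.withLpProdCongr 2
    (LinearIsometryEquiv.toSpanUnitSingleton (‖z‖⁻¹ • z) he).symm (.refl ℝ _)), ?_⟩
  rw [← AddEquiv.eq_symm_apply]
  simp [coord, smul_inv_smul₀ (norm_ne_zero_iff.2 hz)]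

variable {φ : E ≃ₗᵢ[ℝ] WithLp 2 (ℝ × F)}

lemma norm_coord_symm_sq (p : ℝ × F) : ‖(coord φ).symm p‖ ^ 2 = p.1 ^ 2 + ‖p.2‖ ^ 2 := by
  have h : (coord φ).symm p = φ.symm (WithLp.toLp 2 p) := rfl
  rw [h, φ.symm.norm_map, WithLp.prod_norm_sq_eq_of_L2]
  simp

lemma slice_coord_ball (r : ℝ) (y : F) :
    ∃ a, 0 ≤ a ∧ slice ((coord φ).symm ⁻¹' ball 0 r) y = centeredIoo a := by
  rcases lt_or_ge r 0 with hr | hr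
  · exact ⟨0, le_rfl, by simp [ball_eq_empty.2 hr.le, slice, centeredIoo]⟩
  refine ⟨2 * √(r ^ 2 - ‖y‖ ^ 2), by positivity, ?_⟩
  ext t
  rw [mem_centeredIoo, mul_div_cancel_left₀ _ two_ne_zero, Real.lt_sqrt (abs_nonneg t), sq_abs,
    slice, mem_ofPred_eq, mem_preimage, mem_ball_zero_iff, ← sq_lt_sq₀ (norm_nonneg _) hr,
    norm_coord_symm_sq, lt_sub_iff_add_lt]

lemma volume_slice_ne_top {A : Set E} {R : ℝ} (hA : A ⊆ ball 0 R) (y : F) :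
    volume (slice ((coord φ).symm ⁻¹' A) y) ≠ ∞ := by
  obtain ⟨a, -, ha⟩ := slice_coord_ball (φ := φ) R y
  refine ne_top_of_le_ne_top ?_ (measure_mono fun t ht => ha.subset (hA ht))
  simp [volume_centeredIoo]

lemma steinerAlong_subset_ball {A : Set E} {R : ℝ} (hA : A ⊆ ball 0 R) :
    steinerAlong φ A ⊆ ball 0 R := fun x hx => by
  simpa using steinerSymm_subset (preimage_mono hA) (slice_coord_ball R) hx

variable [FiniteDimensional ℝ E] [MeasurableSpace E] [BorelSpace E] [FiniteDimensional ℝ F]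
  [MeasurableSpace F] [BorelSpace F]

lemma measurePreserving_coord : MeasurePreserving (coord φ) volume volume :=
  (WithLp.volume_preserving_ofLp ℝ F).comp φ.measurePreserving

lemma measurePreserving_coord_symm : MeasurePreserving (coord φ).symm volume volume :=
  φ.symm.measurePreserving.comp (WithLp.volume_preserving_toLp ℝ F)

variable {A B C : Set E} {R : ℝ}

lemma measurableSet_steinerAlong (hA : MeasurableSet A) : MeasurableSet (steinerAlong φ A) :=
  measurePreserving_coord.measurable
    (measurableSet_steinerSymm (measurePreserving_coord_symm.measurable hA))

lemma volume_steinerAlong (hA : MeasurableSet A) (hAR : A ⊆ ball 0 R) :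
    volume (steinerAlong φ A) = volume A := by
  have hA' := measurePreserving_coord_symm (φ := φ).measurable hA
  rw [steinerAlong, measurePreserving_coord.measure_preimage
      (measurableSet_steinerSymm hA').nullMeasurableSet,
    volume_steinerSymm hA' (volume_slice_ne_top hAR),
    measurePreserving_coord_symm.measure_preimage hA.nullMeasurableSet]

lemma rieszForm_le_rieszForm_steinerAlong (hA : MeasurableSet A) (hB : MeasurableSet B)
    (hC : MeasurableSet C) (hAR : A ⊆ ball 0 R) (hBR : B ⊆ ball 0 R) (hCR : C ⊆ ball 0 R) :
    rieszForm volume A B C ≤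
      rieszForm volume (steinerAlong φ A) (steinerAlong φ B) (steinerAlong φ C) := by
  have hm {D : Set E} (hD : MeasurableSet D) : MeasurableSet ((coord φ).symm ⁻¹' D) :=
    measurePreserving_coord_symm.measurable hD
  calc rieszForm volume A B C
      = rieszForm volume ((coord φ).symm ⁻¹' A) ((coord φ).symm ⁻¹' B) ((coord φ).symm ⁻¹' C) :=
        (rieszForm_preimage (e := ((coord φ).symm : ℝ × F →+ E)) measurePreserving_coord_symm
          hA hB hC).symm
    _ ≤ rieszForm volume (steinerSymm ((coord φ).symm ⁻¹' A))
          (steinerSymm ((coord φ).symm ⁻¹' B)) (steinerSymm ((coord φ).symm ⁻¹' C)) :=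
        rieszForm_le_rieszForm_steinerSymm (hm hA) (hm hB) (hm hC) (volume_slice_ne_top hAR)
          (volume_slice_ne_top hBR) (volume_slice_ne_top hCR)
    _ = rieszForm volume (steinerAlong φ A) (steinerAlong φ B) (steinerAlong φ C) :=
        (rieszForm_preimage (e := (coord φ : E →+ ℝ × F)) measurePreserving_coord
          (measurableSet_steinerSymm (hm hA)) (measurableSet_steinerSymm (hm hB))
          (measurableSet_steinerSymm (hm hC))).symm

lemma volume_steinerAlong_diff_add_overlap_le (hA : MeasurableSet A) (hAR : A ⊆ ball 0 R)
    {z : E} {c : ℝ} (hz : coord φ z = (c, 0)) (r : ℝ) :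
    volume (steinerAlong φ A \ ball 0 r) + volume (overlap (A \ ball 0 r) (ball 0 r \ A) z) ≤
      volume (A \ ball 0 r) := by
  have hm {D : Set E} (hD : MeasurableSet D) : MeasurableSet ((coord φ).symm ⁻¹' D) :=
    measurePreserving_coord_symm.measurable hD
  have hball : MeasurableSet (ball (0 : E) r) := measurableSet_ball
  have hvol {X : Set E} (hX : MeasurableSet X) : volume ((coord φ).symm ⁻¹' X) = volume X :=
    measurePreserving_coord_symm.measure_preimage hX.nullMeasurableSet
  have hoverlap : (coord φ).symm ⁻¹' overlap (A \ ball 0 r) (ball 0 r \ A) z =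
      overlap ((coord φ).symm ⁻¹' (A \ ball 0 r)) ((coord φ).symm ⁻¹' (ball 0 r \ A)) (c, 0) := by
    ext p
    rw [← hz]
    simp [overlap]
  have hsteiner : (coord φ).symm ⁻¹' (steinerAlong φ A \ ball 0 r) =
      steinerSymm ((coord φ).symm ⁻¹' A) \ (coord φ).symm ⁻¹' ball 0 r := by
    ext p
    simp [steinerAlong]
  rw [← hvol ((measurableSet_steinerAlong hA).diff hball), ← hvol (hA.diff hball),
    ← hvol (measurableSet_overlap (hA.diff hball) (hball.diff hA) z), hoverlap, hsteiner]
  grw [volume_overlap_le_lintegral_min_slice (hm (hA.diff hball)) (hm (hball.diff hA))]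
  exact volume_steinerSymm_diff_add_lintegral_min_le (hm hA) (hm hball) (volume_slice_ne_top hAR)
    fun y => (slice_coord_ball r y).imp fun _ => And.right

lemma volume_steinerAlong_diff_le (hA : MeasurableSet A) (hAR : A ⊆ ball 0 R) (r : ℝ) :
    volume (steinerAlong φ A \ ball 0 r) ≤ volume (A \ ball 0 r) :=
  le_self_add.trans
    (volume_steinerAlong_diff_add_overlap_le hA hAR (map_zero (coord φ)) r)

end Direction

/-! ### Riesz's inequality for bounded sets -/

section Bounded

variable {E : Type*} [NormedAddCommGroup E] [InnerProductSpace ℝ E] [FiniteDimensional ℝ E]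
  [MeasurableSpace E] [BorelSpace E]

lemma exists_mul_div_le_volume_overlap {A B : Set E} {R : ℝ} (hR : 0 < R) (hA : MeasurableSet A)
    (hB : MeasurableSet B) (hAR : A ⊆ ball 0 R) (hBR : B ⊆ ball 0 R) :
    ∃ z, volume A * volume B / volume (ball (0 : E) (2 * R)) ≤ volume (overlap A B z) := by
  have hfin {D : Set E} (hD : D ⊆ ball 0 R) : volume D ≠ ∞ :=
    ((measure_mono hD).trans_lt measure_ball_lt_top).ne
  have hsupp : Function.support (fun z => volume (overlap A B z)) ⊆ ball 0 (2 * R) := by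
    intro z hz
    obtain ⟨y, hzy, hy⟩ := nonempty_of_measure_ne_zero hz
    have hzy' := mem_ball_zero_iff.1 (hAR hzy)
    have hy' := mem_ball_zero_iff.1 (hBR hy)
    rw [mem_ball_zero_iff]
    calc ‖z‖ = ‖z + y - y‖ := by rw [add_sub_cancel_right]
      _ ≤ ‖z + y‖ + ‖y‖ := norm_sub_le _ _
      _ < 2 * R := by linarith
  have hint : ∫⁻ z in ball 0 (2 * R), volume (overlap A B z) = volume A * volume B := by
    rw [setLIntegral_eq_of_support_subset hsupp, lintegral_measure_overlap hA hB]
  obtain ⟨z, -, hz⟩ := exists_setLAverage_le (measure_ball_pos volume (0 : E) (by positivity)).ne'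
    measurableSet_ball.nullMeasurableSet
    (hint.trans_ne (ENNReal.mul_ne_top (hfin hAR) (hfin hBR)))
  exact ⟨z, by rwa [setLAverage_eq, hint] at hz⟩

/-- A competitor in the maximization of the Riesz form: a triple of subsets of the ball of radius
`R`, equimeasurable with the balls of radii `r i`, whose Riesz form is at least `q`. -/
structure IsCompetitor (R : ℝ) (r : Fin 3 → ℝ) (q : ℝ≥0∞) (A : Fin 3 → Set E) : Prop where
  measurableSet : ∀ i, MeasurableSet (A i)
  subset_ball : ∀ i, A i ⊆ ball 0 R
  volume_eq : ∀ i, volume (A i) = volume (ball (0 : E) (r i))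
  le_rieszForm : q ≤ rieszForm volume (A 0) (A 1) (A 2)

/-- The total measure of the parts of the sets `A i` outside the balls of radii `r i`, which
measures how far a competitor is from the conjectured maximizer. -/
noncomputable def excess (r : Fin 3 → ℝ) (A : Fin 3 → Set E) : ℝ≥0∞ :=
  ∑ i, volume (A i \ ball 0 (r i))

variable {R : ℝ} {r : Fin 3 → ℝ} {q : ℝ≥0∞} {A : Fin 3 → Set E}

lemma excess_ne_top (hA : IsCompetitor R r q A) : excess r A ≠ ∞ :=
  ENNReal.sum_ne_top.2 fun i _ => ne_top_of_le_ne_top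
    (hA.volume_eq i ▸ measure_ball_lt_top.ne) (measure_mono sdiff_subset)

lemma IsCompetitor.steinerAlong {F : Type*} [NormedAddCommGroup F] [InnerProductSpace ℝ F]
    [FiniteDimensional ℝ F] [MeasurableSpace F] [BorelSpace F] (hA : IsCompetitor R r q A)
    (φ : E ≃ₗᵢ[ℝ] WithLp 2 (ℝ × F)) :
    IsCompetitor R r q fun i => steinerAlong φ (A i) where
  measurableSet i := measurableSet_steinerAlong (hA.measurableSet i)
  subset_ball i := steinerAlong_subset_ball (hA.subset_ball i)
  volume_eq i :=
    (volume_steinerAlong (hA.measurableSet i) (hA.subset_ball i)).trans (hA.volume_eq i)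
  le_rieszForm := hA.le_rieszForm.trans <| rieszForm_le_rieszForm_steinerAlong
    (hA.measurableSet 0) (hA.measurableSet 1) (hA.measurableSet 2) (hA.subset_ball 0)
    (hA.subset_ball 1) (hA.subset_ball 2)

lemma exists_overlap_excess (hA : IsCompetitor R r q A) (hR : 0 < R) (hr : ∀ i, r i ≤ R) :
    ∃ i z, (excess r A / 3) ^ 2 / volume (ball (0 : E) (2 * R)) ≤
      volume (overlap (A i \ ball 0 (r i)) (ball 0 (r i) \ A i) z) := by
  obtain ⟨i, hi⟩ : ∃ i, excess r A / 3 ≤ volume (A i \ ball 0 (r i)) := by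
    by_contra! hlt
    have h := ENNReal.sum_lt_sum_of_nonempty Finset.univ_nonempty fun i _ => hlt i
    simp [excess, ENNReal.mul_div_cancel] at h
  have hsymm : volume (ball 0 (r i) \ A i) = volume (A i \ ball 0 (r i)) :=
    measure_sdiff_symm measurableSet_ball.nullMeasurableSet (hA.measurableSet i).nullMeasurableSet
      (hA.volume_eq i).symm (by finiteness)
  obtain ⟨z, hz⟩ := exists_mul_div_le_volume_overlap hR
    ((hA.measurableSet i).diff measurableSet_ball) (measurableSet_ball.diff (hA.measurableSet i))
    (sdiff_subset.trans (hA.subset_ball i)) (sdiff_subset.trans (ball_subset_ball (hr i)))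
  refine ⟨i, z, le_trans ?_ hz⟩
  rw [hsymm, sq]
  gcongr

-- Symmetrizing along a direction `z` which carries much of the excess of some `A i` into the ball.
lemma exists_excess_add_le (hA : IsCompetitor R r q A) (hR : 0 < R) (hr : ∀ i, r i ≤ R) :
    ∃ A' : Fin 3 → Set E, IsCompetitor R r q A' ∧
      excess r A' + (excess r A / 3) ^ 2 / volume (ball (0 : E) (2 * R)) ≤ excess r A := by
  obtain ⟨i, z, hz⟩ := exists_overlap_excess hA hR hr
  rcases eq_or_ne z 0 with rfl | hz₀
  · have hempty : overlap (A i \ ball 0 (r i)) (ball 0 (r i) \ A i) 0 = ∅ := by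
      ext y
      simp [overlap]
      tauto
    rw [hempty, measure_empty] at hz
    exact ⟨A, hA, by rw [nonpos_iff_eq_zero.1 hz, add_zero]⟩
  obtain ⟨φ, hφ⟩ := exists_coord_eq_norm hz₀
  refine ⟨_, hA.steinerAlong φ, ?_⟩
  grw [hz]
  unfold excess
  rw [← Finset.add_sum_erase _ _ (Finset.mem_univ i),
    ← Finset.add_sum_erase _ _ (Finset.mem_univ i), add_right_comm]
  exact add_le_add
    (volume_steinerAlong_diff_add_overlap_le (hA.measurableSet i) (hA.subset_ball i) hφ _)
    (Finset.sum_le_sum fun j _ =>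
      volume_steinerAlong_diff_le (hA.measurableSet j) (hA.subset_ball j) _)

lemma iInf_excess_eq_zero (hA : IsCompetitor R r q A) (hR : 0 < R) (hr : ∀ i, r i ≤ R) :
    ⨅ A' : {A' : Fin 3 → Set E // IsCompetitor R r q A'}, excess r A'.1 = 0 := by
  set I := ⨅ A' : {A' : Fin 3 → Set E // IsCompetitor R r q A'}, excess r A'.1
  set V := volume (ball (0 : E) (2 * R))
  have hI : I ≠ ∞ := ne_top_of_le_ne_top (excess_ne_top hA) (iInf_le_of_le ⟨A, hA⟩ le_rfl)
  have hstep : I + (I / 3) ^ 2 / V ≤ I := le_iInf fun ⟨A', hA'⟩ => by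
    obtain ⟨A'', hA'', hle⟩ := exists_excess_add_le hA' hR hr
    refine le_trans ?_ hle
    gcongr
    · exact iInf_le_of_le ⟨A'', hA''⟩ le_rfl
    · exact iInf_le_of_le ⟨A', hA'⟩ le_rfl
  have hzero : (I / 3) ^ 2 / V = 0 := by
    simpa using (ENNReal.add_le_add_iff_left hI).1 (hstep.trans_eq (add_zero I).symm)
  simpa [V, measure_ball_lt_top.ne] using hzero

lemma le_rieszForm_ball_add_mul_excess (hA : IsCompetitor R r q A) :
    q ≤ rieszForm volume (ball (0 : E) (r 0)) (ball 0 (r 1)) (ball 0 (r 2)) +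
      volume (ball (0 : E) R) * excess r A := by
  have hV (i : Fin 3) : volume (A i) ≤ volume (ball (0 : E) R) := measure_mono (hA.subset_ball i)
  grw [hA.le_rieszForm, rieszForm_le_add_diff (hA.measurableSet 0) (hA.measurableSet 2)
    measurableSet_ball, hV 0, hV 1, excess, Fin.sum_univ_three, mul_add, mul_add]
  rw [mul_comm (volume (A 0 \ _))]

theorem rieszForm_le_rieszForm_ball {A B C : Set E} {R a b c : ℝ} (hA : MeasurableSet A)
    (hB : MeasurableSet B) (hC : MeasurableSet C) (hAR : A ⊆ ball 0 R) (hBR : B ⊆ ball 0 R)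
    (hCR : C ⊆ ball 0 R) (hAa : volume A = volume (ball (0 : E) a))
    (hBb : volume B = volume (ball (0 : E) b)) (hCc : volume C = volume (ball (0 : E) c)) :
    rieszForm volume A B C ≤ rieszForm volume (ball (0 : E) a) (ball 0 b) (ball 0 c) := by
  set F := rieszForm volume (ball (0 : E) a) (ball 0 b) (ball 0 c)
  set q := rieszForm volume A B C
  set R' := max 1 (max R (max a (max b c)))
  have hR' : R ≤ R' := by grind
  have hcomp : IsCompetitor R' ![a, b, c] q ![A, B, C] := by
    refine ⟨fun i => ?_, fun i => ?_, fun i => ?_, le_rfl⟩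
    · fin_cases i <;> assumption
    · exact Subset.trans (by fin_cases i <;> assumption) (ball_subset_ball hR')
    · fin_cases i <;> assumption
  have hle : (q - F) / volume (ball (0 : E) R') ≤ 0 := by
    rw [← iInf_excess_eq_zero hcomp (by grind) (by simp [Fin.forall_fin_succ, R'])]
    refine le_iInf fun A' => ENNReal.div_le_of_le_mul ?_
    rw [mul_comm]
    exact tsub_le_iff_left.2 (le_rieszForm_ball_add_mul_excess A'.2)
  simpa [tsub_eq_zero_iff_le, measure_ball_lt_top.ne] using hle

end Bounded

/-! ### Schwarz rearrangement of sets -/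

section SchwarzSet

variable {n : ℕ} {A B C : Set (EuclideanSpace ℝ (Fin n))}

lemma schwarzRadius_nonneg : 0 ≤ schwarzRadius n A := by
  unfold schwarzRadius
  positivity

lemma schwarzSet_mono (h : volume A ≤ volume B) (hB : volume B ≠ ∞) :
    schwarzSet n A ⊆ schwarzSet n B := by
  have := ENNReal.toReal_mono hB h
  unfold schwarzSet schwarzRadius
  gcongr

lemma measurableSet_schwarzSet : MeasurableSet (schwarzSet n A) := measurableSet_ball

variable [NeZero n]

lemma volume_schwarzSet (hA : volume A ≠ ∞) : volume (schwarzSet n A) = volume A := by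
  set ω := volume (ball (0 : EuclideanSpace ℝ (Fin n)) 1)
  have hω : ω ≠ 0 := (measure_ball_pos _ _ one_pos).ne'
  have hω_fin : ω ≠ ∞ := measure_ball_lt_top.ne
  rw [schwarzSet, Measure.addHaar_ball _ _ schwarzRadius_nonneg, finrank_euclideanSpace_fin,
    schwarzRadius, Real.rpow_inv_natCast_pow (by positivity) (NeZero.ne n),
    ← ENNReal.toReal_div, ENNReal.ofReal_toReal (ENNReal.div_ne_top hA hω),
    ENNReal.div_mul_cancel hω hω_fin]

theorem rieszForm_le_rieszForm_schwarzSet (hA : MeasurableSet A) (hB : MeasurableSet B)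
    (hC : MeasurableSet C) (hA_fin : volume A ≠ ∞) (hB_fin : volume B ≠ ∞)
    (hC_fin : volume C ≠ ∞) :
    rieszForm volume A B C ≤
      rieszForm volume (schwarzSet n A) (schwarzSet n B) (schwarzSet n C) := by
  set b := fun k : ℕ => ball (0 : EuclideanSpace ℝ (Fin n)) k
  have hmono (D : Set (EuclideanSpace ℝ (Fin n))) : Monotone fun k => D ∩ b k := fun i j hij =>
    inter_subset_inter_right _ (ball_subset_ball (by exact_mod_cast hij))
  have hUnion (D : Set (EuclideanSpace ℝ (Fin n))) : ⋃ k, D ∩ b k = D := by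
    rw [← inter_iUnion, iUnion_ball_nat, inter_univ]
  have hle (D : Set (EuclideanSpace ℝ (Fin n))) (k : ℕ) : volume (D ∩ b k) ≤ volume D :=
    measure_mono inter_subset_left
  have hvol {D : Set (EuclideanSpace ℝ (Fin n))} (hD : volume D ≠ ∞) (k : ℕ) :
      volume (D ∩ b k) = volume (schwarzSet n (D ∩ b k)) :=
    (volume_schwarzSet (ne_top_of_le_ne_top hD (hle D k))).symm
  conv_lhs => rw [← hUnion A, ← hUnion B, ← hUnion C,
    rieszForm_iUnion (hmono A) (hmono B) (hmono C)]
  refine iSup_le fun k => ?_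
  calc rieszForm volume (A ∩ b k) (B ∩ b k) (C ∩ b k)
      ≤ rieszForm volume (schwarzSet n (A ∩ b k)) (schwarzSet n (B ∩ b k))
          (schwarzSet n (C ∩ b k)) :=
        rieszForm_le_rieszForm_ball (hA.inter measurableSet_ball) (hB.inter measurableSet_ball)
          (hC.inter measurableSet_ball) inter_subset_right inter_subset_right inter_subset_right
          (hvol hA_fin k) (hvol hB_fin k) (hvol hC_fin k)
    _ ≤ rieszForm volume (schwarzSet n A) (schwarzSet n B) (schwarzSet n C) :=
        rieszForm_mono (schwarzSet_mono (hle A k) hA_fin) (schwarzSet_mono (hle B k) hB_fin)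
          (schwarzSet_mono (hle C k) hC_fin)

lemma rieszForm_schwarzSet_compl_le (hA : MeasurableSet A) (hB : MeasurableSet B)
    (hC : MeasurableSet C) (hA_fin : volume A ≠ ∞) (hB_fin : volume B ≠ ∞)
    (hC_fin : volume C ≠ ∞) :
    rieszForm volume (schwarzSet n A) (schwarzSet n B)ᶜ (schwarzSet n C) ≤
      rieszForm volume A Bᶜ C := by
  set q := rieszForm volume A B C
  have hq : q ≠ ∞ := by
    refine ne_top_of_le_ne_top (ENNReal.mul_ne_top hA_fin hC_fin) ?_
    exact le_self_add.trans (rieszForm_add_rieszForm_compl hA hB hC).le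
  rw [← ENNReal.add_le_add_iff_left hq]
  calc q + rieszForm volume (schwarzSet n A) (schwarzSet n B)ᶜ (schwarzSet n C)
      ≤ rieszForm volume (schwarzSet n A) (schwarzSet n B) (schwarzSet n C) +
          rieszForm volume (schwarzSet n A) (schwarzSet n B)ᶜ (schwarzSet n C) := by
        gcongr
        exact rieszForm_le_rieszForm_schwarzSet hA hB hC hA_fin hB_fin hC_fin
    _ = volume A * volume C := by
        rw [rieszForm_add_rieszForm_compl measurableSet_schwarzSet measurableSet_schwarzSet
          measurableSet_schwarzSet, volume_schwarzSet hA_fin, volume_schwarzSet hC_fin]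
    _ = q + rieszForm volume A Bᶜ C := (rieszForm_add_rieszForm_compl hA hB hC).symm

end SchwarzSet

/-! ### Schwarz rearrangement of functions -/

section Superlevel

variable {α : Type*} {u : α → ℝ}

/-- The superlevel set `{|u| > t}` from which the rearrangement of `u` is built. -/
def superlevel (u : α → ℝ) (t : ℝ) : Set α := {x | t < |u x|}

lemma superlevel_antitone (u : α → ℝ) : Antitone (superlevel u) :=
  fun _ _ hst _ hx => hst.trans_lt hx

lemma superlevel_of_nonneg (hu : ∀ x, 0 ≤ u x) (t : ℝ) : superlevel u t = {x | t < u x} := by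
  simp only [superlevel, abs_of_nonneg (hu _)]

variable [MeasurableSpace α] {μ : Measure α}

lemma measurableSet_superlevel (hu : Measurable u) (t : ℝ) : MeasurableSet (superlevel u t) :=
  measurableSet_lt measurable_const hu.abs

lemma measure_superlevel_congr {w : α → ℝ} (h : u =ᵐ[μ] w) (t : ℝ) :
    μ (superlevel u t) = μ (superlevel w t) :=
  measure_congr <| h.mono fun x (hx : u x = w x) => congrArg (fun a => t < |a|) hx

lemma exists_gt_lt_measure_superlevel {c : ℝ≥0∞} {t : ℝ} (h : c < μ (superlevel u t)) :
    ∃ s > t, c < μ (superlevel u s) := by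
  obtain ⟨s, hs_anti, hs_gt, hs_lim⟩ := exists_seq_strictAnti_tendsto t
  have hUnion : ⋃ k, superlevel u (s k) = superlevel u t := by
    refine Subset.antisymm (iUnion_subset fun k => superlevel_antitone u (hs_gt k).le) ?_
    intro x hx
    exact mem_iUnion.2 (hs_lim.eventually_lt_const hx).exists
  have hmono : Monotone fun k => superlevel u (s k) :=
    fun i j hij => superlevel_antitone u (hs_anti.antitone hij)
  rw [← hUnion, hmono.measure_iUnion] at h
  obtain ⟨k, hk⟩ := lt_iSup_iff.1 h
  exact ⟨s k, hs_gt k, hk⟩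

lemma exists_measure_superlevel_lt {c : ℝ≥0∞} (hc : c ≠ 0) (hu : Measurable u)
    (hfin : ∀ t, 0 < t → μ (superlevel u t) ≠ ∞) : ∃ t, μ (superlevel u t) < c := by
  set s := fun k : ℕ => superlevel u (k + 1)
  have hs_anti : Antitone s := fun i j hij => superlevel_antitone u (by gcongr)
  have hInter : ⋂ k, s k = ∅ := by
    refine eq_empty_of_forall_notMem fun x hx => ?_
    obtain ⟨k, hk⟩ := exists_nat_gt |u x|
    have : (k : ℝ) + 1 < |u x| := mem_iInter.1 hx k
    linarith
  have h : ⨅ k, μ (s k) < c := by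
    rw [← hs_anti.measure_iInter (fun k => (measurableSet_superlevel hu _).nullMeasurableSet)
      ⟨0, hfin _ (by positivity)⟩, hInter, measure_empty]
    exact hc.bot_lt
  obtain ⟨k, hk⟩ := iInf_lt_iff.1 h
  exact ⟨k + 1, hk⟩

end Superlevel

section SchwarzRearr

lemma lt_volume_toReal_iff_mem {L : Set ℝ} (hpos : L ⊆ Ioi 0) (hbdd : BddAbove L)
    (hdown : ∀ s ∈ L, ∀ t, 0 < t → t ≤ s → t ∈ L) (hopen : ∀ t ∈ L, ∃ s > t, s ∈ L)
    {t : ℝ} (ht : 0 < t) : t < (volume L).toReal ↔ t ∈ L := by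
  have hL : L = Ioo 0 (sSup L) := by
    ext r
    refine ⟨fun hr => ⟨hpos hr, ?_⟩, fun ⟨hr_pos, hr⟩ => ?_⟩
    · obtain ⟨s, hrs, hs⟩ := hopen r hr
      exact hrs.trans_le (le_csSup hbdd hs)
    · have hne : L.Nonempty := by
        by_contra hempty
        rw [not_nonempty_iff_eq_empty.1 hempty, Real.sSup_empty] at hr
        exact hr_pos.not_gt hr
      obtain ⟨s, hs, hrs⟩ := exists_lt_of_lt_csSup hne hr
      exact hdown s hs r hr_pos hrs.le
  have hsup : 0 ≤ sSup L := Real.sSup_nonneg fun r hr => (hpos hr).le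
  rw [hL, Real.volume_Ioo, sub_zero, ENNReal.toReal_ofReal hsup]
  exact ⟨fun h => ⟨ht, h⟩, fun h => h.2⟩

variable {n : ℕ} {u : EuclideanSpace ℝ (Fin n) → ℝ}

lemma measurable_schwarzRadius_superlevel :
    Measurable fun t => schwarzRadius n (superlevel u t) := by
  have hanti : Antitone fun t => volume (superlevel u t) :=
    fun s t hst => measure_mono (superlevel_antitone u hst)
  exact (hanti.measurable.ennreal_toReal.div_const _).pow_const _

lemma schwarzRearr_eq_volume_toReal (x : EuclideanSpace ℝ (Fin n)) :
    schwarzRearr n u x = (volume {t | 0 < t ∧ x ∈ schwarzSet n (superlevel u t)}).toReal := by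
  have hmeas : MeasurableSet {t | x ∈ schwarzSet n (superlevel u t)} := by
    simp only [schwarzSet, mem_ball_zero_iff]
    exact measurableSet_lt measurable_const measurable_schwarzRadius_superlevel
  calc schwarzRearr n u x
      = ∫ t in Ioi 0, {t | x ∈ schwarzSet n (superlevel u t)}.indicator (fun _ => (1 : ℝ)) t := rfl
    _ = (volume {t | 0 < t ∧ x ∈ schwarzSet n (superlevel u t)}).toReal := by
      rw [integral_indicator hmeas, Measure.restrict_restrict hmeas, setIntegral_const, smul_eq_mul,
        mul_one, inter_comm]
      rfl

lemma schwarzRearr_nonneg (u : EuclideanSpace ℝ (Fin n) → ℝ) (x : EuclideanSpace ℝ (Fin n)) :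
    0 ≤ schwarzRearr n u x :=
  schwarzRearr_eq_volume_toReal x ▸ ENNReal.toReal_nonneg

lemma measurable_schwarzRearr (u : EuclideanSpace ℝ (Fin n) → ℝ) :
    Measurable (schwarzRearr n u) := by
  have hmeas : MeasurableSet {p : EuclideanSpace ℝ (Fin n) × ℝ |
      0 < p.2 ∧ p.1 ∈ schwarzSet n (superlevel u p.2)} := by
    simp only [schwarzSet, mem_ball_zero_iff]
    exact (measurableSet_lt measurable_const measurable_snd).inter
      (measurableSet_lt measurable_fst.norm
        (measurable_schwarzRadius_superlevel.comp measurable_snd))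
  rw [funext schwarzRearr_eq_volume_toReal]
  exact (measurable_measure_prodMk_left hmeas).ennreal_toReal

lemma schwarzRearr_congr {w : EuclideanSpace ℝ (Fin n) → ℝ}
    (h : ∀ t, volume (superlevel u t) = volume (superlevel w t)) :
    schwarzRearr n u = schwarzRearr n w := by
  ext x
  simp only [schwarzRearr_eq_volume_toReal, schwarzSet, schwarzRadius, h]

lemma volume_superlevel_comp_neg (u : EuclideanSpace ℝ (Fin n) → ℝ) (t : ℝ) :
    volume (superlevel (fun x => u (-x)) t) = volume (superlevel u t) :=
  Measure.measure_preimage_neg volume (superlevel u t)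

lemma schwarzRearr_neg (u : EuclideanSpace ℝ (Fin n) → ℝ) (x : EuclideanSpace ℝ (Fin n)) :
    schwarzRearr n u (-x) = schwarzRearr n u x := by
  simp only [schwarzRearr_eq_volume_toReal, schwarzSet, mem_ball_zero_iff, norm_neg]

variable [NeZero n]

lemma mem_schwarzSet_iff {A : Set (EuclideanSpace ℝ (Fin n))} (hA : volume A ≠ ∞)
    {x : EuclideanSpace ℝ (Fin n)} :
    x ∈ schwarzSet n A ↔ volume (ball (0 : EuclideanSpace ℝ (Fin n)) ‖x‖) < volume A := by
  have hball : volume (ball (0 : EuclideanSpace ℝ (Fin n)) 1) ≠ 0 :=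
    (measure_ball_pos _ _ one_pos).ne'
  rw [← volume_schwarzSet hA, schwarzSet, mem_ball_zero_iff,
    Measure.addHaar_ball _ _ schwarzRadius_nonneg, Measure.addHaar_ball _ _ (norm_nonneg x),
    finrank_euclideanSpace_fin, ENNReal.mul_lt_mul_iff_left hball measure_ball_lt_top.ne,
    ENNReal.ofReal_lt_ofReal_iff_of_nonneg (by positivity),
    pow_lt_pow_iff_left₀ (norm_nonneg x) schwarzRadius_nonneg (NeZero.ne n)]

lemma lt_schwarzRearr_iff (hu : Measurable u) (hfin : ∀ t, 0 < t → volume (superlevel u t) ≠ ∞)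
    {x : EuclideanSpace ℝ (Fin n)} (hx : x ≠ 0) {t : ℝ} (ht : 0 < t) :
    t < schwarzRearr n u x ↔ x ∈ schwarzSet n (superlevel u t) := by
  set c := volume (ball (0 : EuclideanSpace ℝ (Fin n)) ‖x‖)
  have hc : c ≠ 0 := (measure_ball_pos _ _ (norm_pos_iff.2 hx)).ne'
  have hmem {s : ℝ} (hs : 0 < s) :
      x ∈ schwarzSet n (superlevel u s) ↔ c < volume (superlevel u s) :=
    mem_schwarzSet_iff (hfin s hs)
  have hL : {s | 0 < s ∧ x ∈ schwarzSet n (superlevel u s)} =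
      {s | 0 < s ∧ c < volume (superlevel u s)} := by
    ext s
    exact and_congr_right hmem
  obtain ⟨T, hT⟩ := exists_measure_superlevel_lt hc hu hfin
  rw [schwarzRearr_eq_volume_toReal, hL, hmem ht, lt_volume_toReal_iff_mem _ _ _ _ ht]
  · exact and_iff_right ht
  · exact fun s hs => hs.1
  · refine ⟨T, fun s hs => ?_⟩
    by_contra! hTs
    exact (hs.2.trans_le (measure_mono (superlevel_antitone u hTs.le))).not_gt hT
  · exact fun s hs r hr hrs => ⟨hr, hs.2.trans_le (measure_mono (superlevel_antitone u hrs))⟩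
  · rintro s ⟨hs, hcs⟩
    obtain ⟨r, hsr, hcr⟩ := exists_gt_lt_measure_superlevel hcs
    exact ⟨r, hsr, hs.trans hsr, hcr⟩

lemma superlevel_schwarzRearr_ae_eq (hu : Measurable u)
    (hfin : ∀ t, 0 < t → volume (superlevel u t) ≠ ∞) {t : ℝ} (ht : 0 < t) :
    superlevel (schwarzRearr n u) t =ᵐ[volume] schwarzSet n (superlevel u t) := by
  rw [superlevel_of_nonneg (schwarzRearr_nonneg u)]
  filter_upwards [Measure.ae_ne volume (0 : EuclideanSpace ℝ (Fin n))] with x hx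
  exact propext (lt_schwarzRearr_iff hu hfin hx ht)

end SchwarzRearr

/-! ### Convex functions as mixtures of hinges -/

section Convex

lemma lintegral_ofReal_sub (ρ : Measure ℝ) [SFinite ρ] (w : ℝ) :
    ∫⁻ σ, ENNReal.ofReal (w - σ) ∂ρ = ∫⁻ r in Iio w, ρ (Iic r) := by
  have hmeas : MeasurableSet {p : ℝ × ℝ | p.1 ≤ p.2} := measurableSet_le'
  calc ∫⁻ σ, ENNReal.ofReal (w - σ) ∂ρ
      = ∫⁻ σ, (volume.restrict (Iio w)) (Prod.mk σ ⁻¹' {p : ℝ × ℝ | p.1 ≤ p.2}) ∂ρ := by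
        refine lintegral_congr fun σ => ?_
        rw [Measure.restrict_apply (measurable_prodMk_left hmeas), ← Real.volume_Ico]
        rfl
    _ = ∫⁻ r in Iio w, ρ (Iic r) := by
        rw [← Measure.prod_apply hmeas, Measure.prod_apply_symm hmeas]
        rfl

variable {J : ℝ → ℝ}

lemma monotone_rightDeriv (hJ : ConvexOn ℝ univ J) :
    Monotone fun r => derivWithin J (Ioi r) r := by
  simpa [monotoneOn_univ] using hJ.monotoneOn_rightDeriv

lemma rightDeriv_nonneg (hJ : ConvexOn ℝ univ J) (hJ_nonneg : ∀ t, 0 ≤ J t) (hJ_zero : J 0 = 0)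
    {r : ℝ} (hr : 0 ≤ r) : 0 ≤ derivWithin J (Ioi r) r := by
  refine le_trans ?_ (monotone_rightDeriv hJ hr)
  dsimp only
  rw [hJ.rightDeriv_eq_sInf_slope_of_mem_interior (by simp)]
  refine Real.sInf_nonneg ?_
  rintro _ ⟨y, ⟨-, hy⟩, rfl⟩
  rw [slope_def_field, hJ_zero, sub_zero, sub_zero]
  exact div_nonneg (hJ_nonneg y) (le_of_lt hy)

lemma setLIntegral_ofReal_rightDeriv (hJ : ConvexOn ℝ univ J) (hJ_nonneg : ∀ t, 0 ≤ J t)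
    (hJ_zero : J 0 = 0) {w : ℝ} (hw : 0 ≤ w) :
    ∫⁻ r in Ioc 0 w, ENNReal.ofReal (derivWithin J (Ioi r) r) = ENNReal.ofReal (J w) := by
  have hint := (monotone_rightDeriv hJ).intervalIntegrable (μ := volume) (a := 0) (b := w)
  have hftc := intervalIntegral.integral_eq_sub_of_hasDeriv_right_of_le hw
    ((hJ.continuousOn isOpen_univ).mono (subset_univ _))
    (fun x _ => hJ.hasDerivWithinAt_rightDeriv_of_mem_interior (by simp)) hint
  rw [hJ_zero, sub_zero, intervalIntegral.integral_of_le hw] at hftc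
  rw [← hftc, ofReal_integral_eq_lintegral_ofReal hint.1]
  filter_upwards [ae_restrict_mem measurableSet_Ioc] with r hr
  exact rightDeriv_nonneg hJ hJ_nonneg hJ_zero hr.1.le

lemma exists_measure_Iic_eq_rightDeriv (hJ : ConvexOn ℝ univ J) (hJ_nonneg : ∀ t, 0 ≤ J t)
    (hJ_zero : J 0 = 0) : ∃ ρ : Measure ℝ, SFinite ρ ∧ ρ (Iio 0) = 0 ∧
      ∀ᵐ r, 0 ≤ r → ρ (Iic r) = ENNReal.ofReal (derivWithin J (Ioi r) r) := by
  set D : ℝ → ℝ := (Ici 0).indicator fun r => derivWithin J (Ioi r) r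
  have hD_nonneg : 0 ≤ D := indicator_nonneg fun _ => rightDeriv_nonneg hJ hJ_nonneg hJ_zero
  have hD : Monotone D := fun r s hrs => by
    by_cases hr : 0 ≤ r
    · simpa [D, hr, hr.trans hrs] using monotone_rightDeriv hJ hrs
    · exact (indicator_of_notMem hr _).trans_le (hD_nonneg s)
  have hD_neg : ∀ r < 0, hD.stieltjesFunction r = 0 := fun r hr => by
    refine tendsto_nhds_unique (hD.tendsto_rightLim r) (tendsto_const_nhds.congr' ?_)
    filter_upwards [Ioo_mem_nhdsGT hr] with s hs
    simp [D, hs.2]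
  have hlim : Tendsto hD.stieltjesFunction atBot (𝓝 0) :=
    tendsto_const_nhds.congr' ((eventually_lt_atBot 0).mono fun r hr => (hD_neg r hr).symm)
  have hleft : Function.leftLim hD.stieltjesFunction 0 = 0 :=
    leftLim_eq_of_tendsto <| tendsto_const_nhds.congr' <|
      eventually_nhdsWithin_of_forall fun r hr => (hD_neg r hr).symm
  refine ⟨hD.stieltjesFunction.measure, inferInstance, ?_, ?_⟩
  · rw [StieltjesFunction.measure_Iio _ hlim, hleft, sub_zero, ENNReal.ofReal_zero]
  · filter_upwards [hD.countable_not_continuousAt.ae_notMem volume] with r hr hr_nonneg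
    have hcont : ContinuousAt D r := not_not.1 hr
    rw [StieltjesFunction.measure_Iic _ hlim, hD.stieltjesFunction_eq, sub_zero,
      rightLim_eq_of_tendsto (hcont.mono_left nhdsWithin_le_nhds)]
    simp [D, hr_nonneg]

lemma exists_measure_lintegral_ofReal_sub (hJ : ConvexOn ℝ univ J) (hJ_nonneg : ∀ t, 0 ≤ J t)
    (hJ_zero : J 0 = 0) : ∃ ρ : Measure ℝ, SFinite ρ ∧ ρ (Iio 0) = 0 ∧
      ∀ w, ∫⁻ σ, ENNReal.ofReal (w - σ) ∂ρ = ENNReal.ofReal (J (max w 0)) := by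
  obtain ⟨ρ, hρ, hρ_neg, hρ_Iic⟩ := exists_measure_Iic_eq_rightDeriv hJ hJ_nonneg hJ_zero
  refine ⟨ρ, hρ, hρ_neg, fun w => ?_⟩
  have hzero : ∀ r < 0, ρ (Iic r) = 0 := fun r hr =>
    measure_mono_null (fun s hs => lt_of_le_of_lt hs hr) hρ_neg
  calc ∫⁻ σ, ENNReal.ofReal (w - σ) ∂ρ
      = ∫⁻ r in Iio w, ρ (Iic r) := lintegral_ofReal_sub ρ w
    _ = ∫⁻ r in Ico 0 (max w 0), ρ (Iic r) := by
        rw [← lintegral_indicator measurableSet_Iio, ← lintegral_indicator measurableSet_Ico]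
        refine lintegral_congr fun r => ?_
        by_cases hr : r < 0
        · simp [indicator, hr, hzero r hr]
        · grind [indicator]
    _ = ∫⁻ r in Ioc 0 (max w 0), ENNReal.ofReal (derivWithin J (Ioi r) r) := by
        rw [setLIntegral_congr Ico_ae_eq_Ioc]
        refine setLIntegral_congr_fun_ae measurableSet_Ioc ?_
        filter_upwards [hρ_Iic] with r hr hmem
        exact hr hmem.1.le
    _ = ENNReal.ofReal (J (max w 0)) :=
        setLIntegral_ofReal_rightDeriv hJ hJ_nonneg hJ_zero (le_max_right w 0)

end Convex

/-! ### The hinge kernel -/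

section HingeForm

variable {G : Type*} [AddCommGroup G] [MeasurableSpace G]

/-- The functional `∬ (u(x) - v(y) - σ)₊ g(x - y) dμ dμ`: the convex function of the rearrangement
inequality is a hinge with kink at `σ`. -/
noncomputable def hingeForm (μ : Measure G) (σ : ℝ) (u v g : G → ℝ) : ℝ≥0∞ :=
  ∫⁻ p, ENNReal.ofReal (u p.1 - v p.2 - σ) * ENNReal.ofReal (g (p.1 - p.2)) ∂μ.prod μ

lemma volume_restrict_Ioi_hinge {b : ℝ} (hb : 0 ≤ b) (a σ : ℝ) :
    volume.restrict (Ioi 0) {t : ℝ | t + σ < a ∧ b ≤ t} = ENNReal.ofReal (a - b - σ) := by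
  have hIco : {t : ℝ | t + σ < a ∧ b ≤ t} = Ico b (a - σ) := by
    ext t
    simp [lt_sub_iff_add_lt, and_comm]
  have hsub : Ico b (a - σ) ⊆ Ici 0 := fun t ht => hb.trans ht.1
  rw [hIco, Measure.restrict_congr_set Ioi_ae_eq_Ici, Measure.restrict_apply measurableSet_Ico,
    inter_eq_left.2 hsub, Real.volume_Ico, sub_right_comm]

lemma hingeForm_eq_lintegral_rieszForm [MeasurableSub₂ G] {μ : Measure G} [SFinite μ]
    {u v g : G → ℝ} (hu : Measurable u) (hv : Measurable v) (hg : Measurable g)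
    (hu_nonneg : ∀ x, 0 ≤ u x) (hv_nonneg : ∀ x, 0 ≤ v x) (hg_nonneg : ∀ x, 0 ≤ g x) (σ : ℝ) :
    hingeForm μ σ u v g = ∫⁻ q, rieszForm μ (superlevel u (q.1 + σ)) (superlevel v q.1)ᶜ
      (superlevel g q.2) ∂(volume.restrict (Ioi (0 : ℝ))).prod (volume.restrict (Ioi (0 : ℝ))) := by
  set ν := (volume.restrict (Ioi (0 : ℝ))).prod (volume.restrict (Ioi (0 : ℝ)))
  set S : Set ((G × G) × ℝ × ℝ) :=
    {z | (z.2.1 + σ < u z.1.1 ∧ v z.1.2 ≤ z.2.1) ∧ z.2.2 < g (z.1.1 - z.1.2)}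
  have hS : MeasurableSet S := by
    have hSu : MeasurableSet {z : (G × G) × ℝ × ℝ | z.2.1 + σ < u z.1.1} :=
      measurableSet_lt (by fun_prop) (by fun_prop)
    have hSv : MeasurableSet {z : (G × G) × ℝ × ℝ | v z.1.2 ≤ z.2.1} :=
      measurableSet_le (by fun_prop) (by fun_prop)
    have hSg : MeasurableSet {z : (G × G) × ℝ × ℝ | z.2.2 < g (z.1.1 - z.1.2)} :=
      measurableSet_lt (by fun_prop) (by fun_prop)
    exact (hSu.inter hSv).inter hSg
  have hslice (p : G × G) : ν (Prod.mk p ⁻¹' S) =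
      ENNReal.ofReal (u p.1 - v p.2 - σ) * ENNReal.ofReal (g (p.1 - p.2)) := by
    have hprod : Prod.mk p ⁻¹' S = {t | t + σ < u p.1 ∧ v p.2 ≤ t} ×ˢ Iio (g (p.1 - p.2)) := rfl
    rw [hprod, Measure.prod_prod, volume_restrict_Ioi_hinge (hv_nonneg p.2),
      Measure.restrict_apply measurableSet_Iio, inter_comm, Ioi_inter_Iio, Real.volume_Ioo,
      sub_zero]
  calc hingeForm μ σ u v g
      = ∫⁻ q, (μ.prod μ) ((fun p => (p, q)) ⁻¹' S) ∂ν := by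
        rw [← Measure.prod_apply_symm hS, Measure.prod_apply hS]
        exact lintegral_congr fun p => (hslice p).symm
    _ = ∫⁻ q, rieszForm μ (superlevel u (q.1 + σ)) (superlevel v q.1)ᶜ (superlevel g q.2) ∂ν := by
        simp only [superlevel_of_nonneg hu_nonneg, superlevel_of_nonneg hv_nonneg,
          superlevel_of_nonneg hg_nonneg, rieszForm]
        refine lintegral_congr fun q => congrArg _ ?_
        ext p
        simp [S, and_assoc]

end HingeForm

section HingeSchwarz

variable {n : ℕ} [NeZero n] {u v g : EuclideanSpace ℝ (Fin n) → ℝ}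

theorem hingeForm_schwarzRearr_le {σ : ℝ} (hσ : 0 ≤ σ) (hu : Measurable u) (hv : Measurable v)
    (hg : Measurable g) (hu_nonneg : ∀ x, 0 ≤ u x) (hv_nonneg : ∀ x, 0 ≤ v x)
    (hg_nonneg : ∀ x, 0 ≤ g x) (hu_fin : ∀ t, 0 < t → volume (superlevel u t) ≠ ∞)
    (hv_fin : ∀ t, 0 < t → volume (superlevel v t) ≠ ∞)
    (hg_fin : ∀ t, 0 < t → volume (superlevel g t) ≠ ∞) :
    hingeForm volume σ (schwarzRearr n u) (schwarzRearr n v) (schwarzRearr n g) ≤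
      hingeForm volume σ u v g := by
  rw [hingeForm_eq_lintegral_rieszForm hu hv hg hu_nonneg hv_nonneg hg_nonneg,
    hingeForm_eq_lintegral_rieszForm (measurable_schwarzRearr u) (measurable_schwarzRearr v)
      (measurable_schwarzRearr g) (schwarzRearr_nonneg u) (schwarzRearr_nonneg v)
      (schwarzRearr_nonneg g), Measure.prod_restrict]
  refine setLIntegral_mono' (measurableSet_Ioi.prod measurableSet_Ioi) fun ⟨t, r⟩ ⟨ht, hr⟩ => ?_
  have htσ : 0 < t + σ := add_pos_of_pos_of_nonneg ht hσ
  rw [rieszForm_congr_ae (superlevel_schwarzRearr_ae_eq hu hu_fin htσ)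
    (superlevel_schwarzRearr_ae_eq hv hv_fin ht).compl
    (superlevel_schwarzRearr_ae_eq hg hg_fin hr)]
  exact rieszForm_schwarzSet_compl_le (measurableSet_superlevel hu _)
    (measurableSet_superlevel hv _) (measurableSet_superlevel hg _) (hu_fin _ htσ) (hv_fin _ ht)
    (hg_fin _ hr)

end HingeSchwarz

/-! ### Convex kernels -/

section PosPartForm

variable {G : Type*} [AddCommGroup G] [MeasurableSpace G] {J : ℝ → ℝ} {u v g : G → ℝ}

/-- The part of `∬ J(u(x) - v(y)) g(x - y) dμ dμ` coming from the pairs with `v(y) ≤ u(x)`, for a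
function `J` vanishing at the origin. -/
noncomputable def posPartForm (μ : Measure G) (J : ℝ → ℝ) (u v g : G → ℝ) : ℝ≥0∞ :=
  ∫⁻ p, ENNReal.ofReal (J (max (u p.1 - v p.2) 0)) * ENNReal.ofReal (g (p.1 - p.2)) ∂μ.prod μ

lemma ofReal_eq_ofReal_posPart_add_negPart (hJ_zero : J 0 = 0) (w : ℝ) :
    ENNReal.ofReal (J w) = ENNReal.ofReal (J (max w 0)) + ENNReal.ofReal (J (-max (-w) 0)) := by
  rcases le_total w 0 with h | h <;> simp [h, hJ_zero]

variable [MeasurableSub₂ G] {μ : Measure G} [SFinite μ]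

lemma posPartForm_eq_lintegral_hingeForm (hu : Measurable u) (hv : Measurable v)
    (hg : Measurable g) {ρ : Measure ℝ} [SFinite ρ]
    (hρ : ∀ w, ∫⁻ σ, ENNReal.ofReal (w - σ) ∂ρ = ENNReal.ofReal (J (max w 0))) :
    posPartForm μ J u v g = ∫⁻ σ, hingeForm μ σ u v g ∂ρ := by
  unfold hingeForm
  rw [lintegral_lintegral_swap (Measurable.aemeasurable (by fun_prop))]
  refine lintegral_congr fun p => ?_
  rw [lintegral_mul_const _ (by fun_prop), hρ]

lemma lintegral_convex_eq_posPartForm_add (hJ : Measurable J) (hJ_nonneg : ∀ t, 0 ≤ J t)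
    (hJ_zero : J 0 = 0) (hu : Measurable u) (hv : Measurable v) (hg : Measurable g) :
    ∫⁻ x, ∫⁻ y, ENNReal.ofReal (J (u x - v y) * g (x - y)) ∂μ ∂μ =
      posPartForm μ J u v g + posPartForm μ (fun t => J (-t)) v u (fun z => g (-z)) := by
  have hswap : posPartForm μ (fun t => J (-t)) v u (fun z => g (-z)) =
      ∫⁻ p, ENNReal.ofReal (J (-max (-(u p.1 - v p.2)) 0)) *
        ENNReal.ofReal (g (p.1 - p.2)) ∂μ.prod μ := by
    rw [posPartForm, ← lintegral_prod_swap]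
    simp only [Prod.fst_swap, Prod.snd_swap, neg_sub]
  rw [hswap, posPartForm, ← lintegral_add_left (by fun_prop),
    lintegral_lintegral (Measurable.aemeasurable (by fun_prop))]
  refine lintegral_congr fun p => ?_
  rw [ENNReal.ofReal_mul (hJ_nonneg _), ofReal_eq_ofReal_posPart_add_negPart hJ_zero, add_mul]

end PosPartForm

section Main

variable {n : ℕ} {J : ℝ → ℝ} {u v g : EuclideanSpace ℝ (Fin n) → ℝ}

lemma exists_measurable_ae_eq_schwarzRearr_eq (hu : AEMeasurable u) (hu_nonneg : ∀ x, 0 ≤ u x)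
    (hu_fin : ∀ t, 0 < t → volume {x | t < u x} < ∞) :
    ∃ w, Measurable w ∧ (∀ x, 0 ≤ w x) ∧ (∀ t, 0 < t → volume (superlevel w t) ≠ ∞) ∧
      u =ᵐ[volume] w ∧ schwarzRearr n u = schwarzRearr n w := by
  obtain ⟨w, hw, hw_nonneg, huw⟩ := hu.exists_measurable_nonneg (.of_forall hu_nonneg)
  have hlevel (t : ℝ) := measure_superlevel_congr huw t
  refine ⟨w, hw, hw_nonneg, fun t ht => ?_, huw, schwarzRearr_congr hlevel⟩
  rw [← hlevel, superlevel_of_nonneg hu_nonneg]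
  exact (hu_fin t ht).ne

variable [NeZero n]

lemma posPartForm_schwarzRearr_le (hJ : ConvexOn ℝ univ J) (hJ_nonneg : ∀ t, 0 ≤ J t)
    (hJ_zero : J 0 = 0) (hu : Measurable u) (hv : Measurable v)
    (hg : Measurable g) (hu_nonneg : ∀ x, 0 ≤ u x) (hv_nonneg : ∀ x, 0 ≤ v x)
    (hg_nonneg : ∀ x, 0 ≤ g x) (hu_fin : ∀ t, 0 < t → volume (superlevel u t) ≠ ∞)
    (hv_fin : ∀ t, 0 < t → volume (superlevel v t) ≠ ∞)
    (hg_fin : ∀ t, 0 < t → volume (superlevel g t) ≠ ∞) :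
    posPartForm volume J (schwarzRearr n u) (schwarzRearr n v) (schwarzRearr n g) ≤
      posPartForm volume J u v g := by
  obtain ⟨ρ, _, hρ_neg, hρ⟩ := exists_measure_lintegral_ofReal_sub hJ hJ_nonneg hJ_zero
  rw [posPartForm_eq_lintegral_hingeForm hu hv hg hρ,
    posPartForm_eq_lintegral_hingeForm (measurable_schwarzRearr u) (measurable_schwarzRearr v)
      (measurable_schwarzRearr g) hρ]
  have hσ_nonneg : ∀ᵐ σ ∂ρ, 0 ≤ σ :=
    (measure_eq_zero_iff_ae_notMem.1 hρ_neg).mono fun _ hσ => not_lt.1 hσ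
  refine lintegral_mono_ae ?_
  filter_upwards [hσ_nonneg] with σ hσ
  exact hingeForm_schwarzRearr_le hσ hu hv hg hu_nonneg hv_nonneg hg_nonneg hu_fin hv_fin hg_fin

theorem lintegral_convex_schwarzRearr_le (hJ : ConvexOn ℝ univ J) (hJ_nonneg : ∀ t, 0 ≤ J t)
    (hJ_zero : J 0 = 0) (hu : Measurable u) (hv : Measurable v)
    (hg : Measurable g) (hu_nonneg : ∀ x, 0 ≤ u x) (hv_nonneg : ∀ x, 0 ≤ v x)
    (hg_nonneg : ∀ x, 0 ≤ g x) (hu_fin : ∀ t, 0 < t → volume (superlevel u t) ≠ ∞)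
    (hv_fin : ∀ t, 0 < t → volume (superlevel v t) ≠ ∞)
    (hg_fin : ∀ t, 0 < t → volume (superlevel g t) ≠ ∞) :
    ∫⁻ x, ∫⁻ y, ENNReal.ofReal
        (J (schwarzRearr n u x - schwarzRearr n v y) * schwarzRearr n g (x - y)) ≤
      ∫⁻ x, ∫⁻ y, ENNReal.ofReal (J (u x - v y) * g (x - y)) := by
  have hJ_meas : Measurable J := by
    have hcont : Continuous J := continuousOn_univ.1 (hJ.continuousOn isOpen_univ)
    exact hcont.measurable
  have hJ_neg : ConvexOn ℝ univ fun t => J (-t) := hJ.comp_linearMap (-LinearMap.id)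
  have hg_refl : schwarzRearr n (fun z => g (-z)) = fun z => schwarzRearr n g (-z) := by
    rw [schwarzRearr_congr (volume_superlevel_comp_neg g)]
    exact funext fun z => (schwarzRearr_neg g z).symm
  rw [lintegral_convex_eq_posPartForm_add hJ_meas hJ_nonneg hJ_zero hu hv hg,
    lintegral_convex_eq_posPartForm_add hJ_meas hJ_nonneg hJ_zero (measurable_schwarzRearr u)
      (measurable_schwarzRearr v) (measurable_schwarzRearr g), ← hg_refl]
  gcongr
  · exact posPartForm_schwarzRearr_le hJ hJ_nonneg hJ_zero hu hv hg hu_nonneg hv_nonneg hg_nonneg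
      hu_fin hv_fin hg_fin
  · exact posPartForm_schwarzRearr_le hJ_neg (fun t => hJ_nonneg (-t)) (by simpa using hJ_zero)
      hv hu (hg.comp measurable_neg) hv_nonneg hu_nonneg (fun z => hg_nonneg (-z)) hv_fin hu_fin
      fun t ht => volume_superlevel_comp_neg g t ▸ hg_fin t ht

end Main

end RieszRearrangement

open RieszRearrangement in
theorem stmt_0_general (n : ℕ) [NeZero n]
    (J : ℝ → ℝ) (hJ_nonneg : ∀ t, 0 ≤ J t) (hJ_conv : ConvexOn ℝ Set.univ J) (hJ_zero : J 0 = 0)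
    (g u v : EuclideanSpace ℝ (Fin n) → ℝ)
    (hg : AEMeasurable g) (hu : AEMeasurable u) (hv : AEMeasurable v)
    (hg_nonneg : ∀ x, 0 ≤ g x) (hu_nonneg : ∀ x, 0 ≤ u x) (hv_nonneg : ∀ x, 0 ≤ v x)
    (hg_fin : ∀ τ : ℝ, 0 < τ → volume {x | τ < g x} < ∞)
    (hu_fin : ∀ τ : ℝ, 0 < τ → volume {x | τ < u x} < ∞)
    (hv_fin : ∀ τ : ℝ, 0 < τ → volume {x | τ < v x} < ∞) :
    ∫⁻ x, ∫⁻ y, ENNReal.ofReal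
        (J (schwarzRearr n u x - schwarzRearr n v y) * schwarzRearr n g (x - y)) ≤
      ∫⁻ x, ∫⁻ y, ENNReal.ofReal (J (u x - v y) * g (x - y)) := by
  obtain ⟨g', hg', hg'_nonneg, hg'_fin, hgg', hg_rearr⟩ :=
    exists_measurable_ae_eq_schwarzRearr_eq hg hg_nonneg hg_fin
  obtain ⟨u', hu', hu'_nonneg, hu'_fin, huu', hu_rearr⟩ :=
    exists_measurable_ae_eq_schwarzRearr_eq hu hu_nonneg hu_fin
  obtain ⟨v', hv', hv'_nonneg, hv'_fin, hvv', hv_rearr⟩ :=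
    exists_measurable_ae_eq_schwarzRearr_eq hv hv_nonneg hv_fin
  have hae : ∫⁻ x, ∫⁻ y, ENNReal.ofReal (J (u x - v y) * g (x - y)) =
      ∫⁻ x, ∫⁻ y, ENNReal.ofReal (J (u' x - v' y) * g' (x - y)) := by
    refine lintegral_congr_ae (huu'.mono fun x hx => lintegral_congr_ae ?_)
    have hsub := (Measure.measurePreserving_sub_left volume x).quasiMeasurePreserving.ae hgg'
    filter_upwards [hvv', hsub] with y hy hxy
    rw [hx, hy, hxy]
  rw [hae, hg_rearr, hu_rearr, hv_rearr]
  exact lintegral_convex_schwarzRearr_le hJ_conv hJ_nonneg hJ_zero hu' hv' hg' hu'_nonneg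
    hv'_nonneg hg'_nonneg hu'_fin hv'_fin hg'_fin

theorem stmt_0 (n : ℕ) (hn : 1 ≤ n)
    (J : ℝ → ℝ) (hJnonneg : ∀ t, 0 ≤ J t) (hJconv : ConvexOn ℝ Set.univ J) (hJ0 : J 0 = 0)
    (g : EuclideanSpace ℝ (Fin n) → ℝ) (hgint : Integrable g) (hgnonneg : ∀ x, 0 ≤ g x)
    (u v : EuclideanSpace ℝ (Fin n) → ℝ) (hu : Measurable u) (hv : Measurable v)
    (hu0 : ∀ x, 0 ≤ u x) (hv0 : ∀ x, 0 ≤ v x)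
    (huτ : ∀ τ : ℝ, 0 < τ → volume {x | τ < u x} < ⊤)
    (hvτ : ∀ τ : ℝ, 0 < τ → volume {x | τ < v x} < ⊤)
    (hfin : (∫⁻ x : EuclideanSpace ℝ (Fin n), ∫⁻ y : EuclideanSpace ℝ (Fin n),
        ENNReal.ofReal (J (u x - v y) * g (x - y))) ≠ ⊤) :
    (∫⁻ x : EuclideanSpace ℝ (Fin n), ∫⁻ y : EuclideanSpace ℝ (Fin n),
        ENNReal.ofReal (J (schwarzRearr n u x - schwarzRearr n v y) *
          schwarzRearr n g (x - y))) ≤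
      ∫⁻ x : EuclideanSpace ℝ (Fin n), ∫⁻ y : EuclideanSpace ℝ (Fin n),
        ENNReal.ofReal (J (u x - v y) * g (x - y)) := by
  have : NeZero n := ⟨by omega⟩
  exact stmt_0_general n J hJnonneg hJconv hJ0 g u v hgint.1.aemeasurable hu.aemeasurable
    hv.aemeasurable hgnonneg hu0 hv0 (fun _ hτ => hgint.measure_gt_lt_top hτ) huτ hvτ
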